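/- Let K be a nonnegative random variable with K > 0 almost surely, E|log K| < ∞, E[log K] < 0, and E[K^{s_0}] < ∞ for some s_0 > 0. Then there exists s ∈ (0, s_0] such that E[K^s] < 1. -/

import Mathlib

open MeasureTheory

/-- The difference quotients of `s ↦ a ^ s` at `0` are at least `log a`. -/
lemma log_le_rpow_sub_one_div {a s : ℝ} (ha : 0 < a) (hs : 0 < s) :
    Real.log a ≤ (a ^ s - 1) / s := by
  rw [le_div_iff₀ hs, Real.rpow_def_of_pos ha]
  linarith [Real.add_one_le_exp (Real.log a * s)]

/-- The difference quotients of `s ↦ a ^ s` at `0` are monotone in `s`. -/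
lemma rpow_sub_one_div_le {a s t : ℝ} (ha : 0 ≤ a) (hs : 0 < s) (hst : s ≤ t) :
    (a ^ s - 1) / s ≤ (a ^ t - 1) / t := by
  have ht : 0 < t := hs.trans_le hst
  have h := rpow_one_add_le_one_add_mul_self (s := a ^ t - 1) (p := s / t)
    (by linarith [Real.rpow_nonneg ha t]) (by positivity) ((div_le_one ht).2 hst)
  rw [add_sub_cancel, ← Real.rpow_mul ha, mul_div_cancel₀ _ ht.ne'] at h
  rw [div_le_iff₀ hs]
  calc a ^ s - 1 ≤ s / t * (a ^ t - 1) := by linarith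
    _ = (a ^ t - 1) / t * s := by ring

lemma tendsto_rpow_sub_one_div {a : ℝ} (ha : 0 < a) :
    Filter.Tendsto (fun s : ℝ => (a ^ s - 1) / s) (nhdsWithin 0 (Set.Ioi 0))
      (nhds (Real.log a)) := by
  have h := (Real.hasStrictDerivAt_const_rpow ha 0).hasDerivAt.tendsto_slope_zero_right
  simpa [div_eq_inv_mul] using h

/-- Let `K ≥ 0` be a random variable with `K > 0` a.s.,
`E|log K| < ∞`, `E[log K] < 0`, and `E[K^s₀] < ∞` for some `s₀ > 0`. Then there exists
`s ∈ (0, s₀]` with `E[K^s] < 1`. -/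
theorem stmt_5 {Ω : Type*} [MeasurableSpace Ω] (P : Measure Ω) [IsProbabilityMeasure P]
    (K : Ω → ℝ) (hKm : Measurable K) (hK0 : ∀ ω, 0 ≤ K ω)
    (hKpos : ∀ᵐ ω ∂P, 0 < K ω)
    (hlogint : Integrable (fun ω => Real.log (K ω)) P)
    (hlogneg : ∫ ω, Real.log (K ω) ∂P < 0)
    (s₀ : ℝ) (hs₀ : 0 < s₀)
    (hmom : Integrable (fun ω => K ω ^ s₀) P) :
    ∃ s ∈ Set.Ioc (0 : ℝ) s₀, ∫ ω, K ω ^ s ∂P < 1 := by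
  have hbound_int : Integrable
      (fun ω => |Real.log (K ω)| + |(K ω ^ s₀ - 1) / s₀|) P :=
    hlogint.abs.add ((hmom.sub (integrable_const 1)).div_const s₀).abs
  have hmeas (s : ℝ) : AEStronglyMeasurable (fun ω => (K ω ^ s - 1) / s) P :=
    (((hKm.pow_const s).sub_const 1).div_const s).aestronglyMeasurable
  have hbound : ∀ s ∈ Set.Ioc (0 : ℝ) s₀, ∀ᵐ ω ∂P,
      ‖(K ω ^ s - 1) / s‖ ≤ |Real.log (K ω)| + |(K ω ^ s₀ - 1) / s₀| := by
    intro s hs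
    filter_upwards [hKpos] with ω hω
    have hlow := log_le_rpow_sub_one_div hω hs.1
    have hupp := rpow_sub_one_div_le hω.le hs.1 hs.2
    rw [Real.norm_eq_abs, abs_le]
    constructor
    · linarith [neg_abs_le (Real.log (K ω)), abs_nonneg ((K ω ^ s₀ - 1) / s₀)]
    · linarith [le_abs_self ((K ω ^ s₀ - 1) / s₀), abs_nonneg (Real.log (K ω))]
  have hnear : ∀ᶠ s in nhdsWithin (0 : ℝ) (Set.Ioi 0), s ∈ Set.Ioc (0 : ℝ) s₀ :=
    Ioc_mem_nhdsGT hs₀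
  have hlim : Filter.Tendsto (fun s : ℝ => ∫ ω, (K ω ^ s - 1) / s ∂P)
      (nhdsWithin 0 (Set.Ioi 0)) (nhds (∫ ω, Real.log (K ω) ∂P)) :=
    tendsto_integral_filter_of_dominated_convergence _
      (Filter.Eventually.of_forall hmeas) (hnear.mono hbound) hbound_int
      (hKpos.mono fun _ hω => tendsto_rpow_sub_one_div hω)
  obtain ⟨s, hneg, hs⟩ := ((hlim.eventually_lt_const hlogneg).and hnear).exists
  refine ⟨s, hs, ?_⟩
  have hint : Integrable (fun ω => K ω ^ s) P := by
    have h := ((hbound_int.mono' (hmeas s) (hbound s hs)).mul_const s).add (integrable_const 1)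
    refine h.congr (Filter.Eventually.of_forall fun ω => ?_)
    simp [div_mul_cancel₀ _ hs.1.ne']
  rw [integral_div, integral_sub hint (integrable_const 1), div_neg_iff] at hneg
  simp only [integral_const, probReal_univ, smul_eq_mul, mul_one] at hneg
  rcases hneg with h | h
  · exact absurd h.2 hs.1.not_gt
  · linarith [h.1]
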